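/- Let D be a 2-dimensional symmetric diagram that is not identically zero. Then either #(D) = 3, in which case D has exactly one nonzero point, or #(D) > 3, in which case there exist distinct k, m ∈ {1,2,3} such that #(V(D,k,m)) ≤ #(D) − 2. -/

import Mathlib

/-!
Fix the direction `j = 0` and write `E t x = D (t, x, d - t - x)`, so that `E t` is the row `t` of
the diagram. A node with coordinates `(t, x, d + 1 - t - x)` is a triangle of the strip between the
rows `t - 1` and `t`, made of `E (t-1) x`, `E t (x-1)` and `E t x`.

If `t` is a node of the view from the left, then the leftmost triangle of the strip `t` that meets
the support is a node of `D`; likewise for the view from the right and the rightmost triangle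
(`first_node`, `last_node`). If these two triangles coincide, then row `t` vanishes and row `t - 1`
has a single nonzero entry. Let `t₀` and `T` be the first and the last nonzero rows. The strip `t₀`
contains a leftmost and a rightmost node, which differ, so each view has at least one node fewer
than `D`. If neither view gains a second node, then the strip `t₀` has only these two nodes, and any
other strip `t` contains a node only if row `t` vanishes and row `t - 1` has exactly one nonzero
entry (`rigid_or_gain`). Applied to `t = T + 1`, this says that row `T` is a single point. As the
strips `t₀ < t ≤ T` whose row `t` is nonzero have no nodes, row `T - i` is then, by induction on
`i`, constant and nonzero on an interval of `i + 1` points and zero elsewhere (`rows_of_noNode`).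
If `t₀ < T`, then row `t₀` has two adjacent equal nonzero entries, which gives a third node in the
strip `t₀`, a contradiction. Hence `D` has a single nonzero point.

In particular one of the two views in the single direction `j = 0` always suffices.
-/

/-- `down_k`: subtract `1` from the `k`-th entry. -/
def downk {n : ℕ} (k : Fin n) (α : Fin n → ℤ) : Fin n → ℤ :=
  Function.update α k (α k - 1)

/-- A symmetric node of a 2-dimensional symmetric diagram: `D` is nonzero on
at least one of the three points below `α`, and does not take both values `P`
and `N` on them. -/
def SymmNode (D : (Fin 3 → ℤ) → SignType) (α : Fin 3 → ℤ) : Prop :=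
  (∃ k, D (downk k α) ≠ 0) ∧
  ¬ ∃ k m, D (downk k α) = 1 ∧ D (downk m α) = -1

/-- `#(D)` for a symmetric diagram: the number of symmetric nodes. -/
noncomputable def symmNodeCount (D : (Fin 3 → ℤ) → SignType) : ℕ :=
  Set.ncard {α : Fin 3 → ℤ | SymmNode D α}

open Classical in
/-- The view `V(D,k,m)` of a 2-dimensional symmetric diagram of degree `d`,
with remaining index `j`: at `t` (with `u = d − t`) it takes the value `D(α)`
where `α` has `j`-th coordinate `t`, `k`-th coordinate `a` and `m`-th
coordinate `u − a`, and `a` is the smallest integer making this value nonzero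
(`0` if there is none). -/
noncomputable def symmView (d : ℕ) (D : (Fin 3 → ℤ) → SignType)
    (k m j : Fin 3) : ℤ → SignType := fun t =>
  let f : ℤ → (Fin 3 → ℤ) := fun a i =>
    if i = j then t else if i = k then a else ((d : ℤ) - t) - a
  let S : Set ℤ := {a : ℤ | D (f a) ≠ 0}
  if S.Nonempty then D (f (sInf S)) else 0

/-- A node of a 1-dimensional array `W : ℤ → {P,0,N}`, indexed by the right
point of the adjacent pair: the pair `(W (t−1), W t)` is not one of the
configurations `(0,0)`, `(P,N)`, `(N,P)`. -/
def Node1 (W : ℤ → SignType) (t : ℤ) : Prop :=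
  (W (t - 1) ≠ 0 ∨ W t ≠ 0) ∧
  ¬ (W (t - 1) = 1 ∧ W t = -1) ∧ ¬ (W (t - 1) = -1 ∧ W t = 1)

/-! ### Strips of a planar array and their nodes -/

/-- The triangle of the strip `t` at position `x` is a node of the array `E`, that is, its three
entries are not all zero and do not take both signs. -/
def StripNode (E : ℤ → ℤ → SignType) (t x : ℤ) : Prop :=
  (E (t - 1) x ≠ 0 ∨ E t (x - 1) ≠ 0 ∨ E t x ≠ 0) ∧
    ∃ s : SignType, (E (t - 1) x = 0 ∨ E (t - 1) x = s) ∧ (E t (x - 1) = 0 ∨ E t (x - 1) = s) ∧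
      (E t x = 0 ∨ E t x = s)

/-- `W t` is the first nonzero entry of the row `E t` from the left, or `0` if there is none. -/
def IsLeftView (E : ℤ → ℤ → SignType) (W : ℤ → SignType) : Prop :=
  (∀ t, (∀ x, E t x = 0) → W t = 0) ∧
    ∀ t a, E t a ≠ 0 → (∀ x, x < a → E t x = 0) → W t = E t a

/-- `W t` is the first nonzero entry of the row `E t` from the right, or `0` if there is none. -/
def IsRightView (E : ℤ → ℤ → SignType) (W : ℤ → SignType) : Prop :=
  (∀ t, (∀ x, E t x = 0) → W t = 0) ∧
    ∀ t a, E t a ≠ 0 → (∀ x, a < x → E t x = 0) → W t = E t a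

/-- The support of `E` lies in the square `[0, n]²`. -/
def BoundedBy (n : ℤ) (E : ℤ → ℤ → SignType) : Prop :=
  ∀ t x, E t x ≠ 0 → 0 ≤ t ∧ t ≤ n ∧ 0 ≤ x ∧ x ≤ n

lemma exists_least_int {P : ℤ → Prop} {b : ℤ} (hb : ∀ z, P z → b ≤ z) (h : ∃ z, P z) :
    ∃ z, P z ∧ ∀ y, y < z → ¬ P y := by
  obtain ⟨z, hz, hm⟩ := Int.exists_least_of_bdd ⟨b, hb⟩ h
  exact ⟨z, hz, fun y hy hp => absurd (hm y hp) (by omega)⟩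

lemma exists_greatest_int {P : ℤ → Prop} {b : ℤ} (hb : ∀ z, P z → z ≤ b) (h : ∃ z, P z) :
    ∃ z, P z ∧ ∀ y, z < y → ¬ P y := by
  obtain ⟨z, hz, hm⟩ := Int.exists_greatest_of_bdd ⟨b, hb⟩ h
  exact ⟨z, hz, fun y hy hp => absurd (hm y hp) (by omega)⟩

lemma IsLeftView.ne_zero {n : ℤ} {E : ℤ → ℤ → SignType} {W : ℤ → SignType} (hE : BoundedBy n E)
    (hW : IsLeftView E W) {t x : ℤ} (h : E t x ≠ 0) : W t ≠ 0 := by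
  obtain ⟨a, ha, hm⟩ := exists_least_int (P := fun x => E t x ≠ 0)
    (fun z hz => (hE t z hz).2.2.1) ⟨x, h⟩
  rw [hW.2 t a ha (fun x hx => by simpa using hm x hx)]
  exact ha

lemma IsRightView.ne_zero {n : ℤ} {E : ℤ → ℤ → SignType} {W : ℤ → SignType} (hE : BoundedBy n E)
    (hW : IsRightView E W) {t x : ℤ} (h : E t x ≠ 0) : W t ≠ 0 := by
  obtain ⟨a, ha, hm⟩ := exists_greatest_int (P := fun x => E t x ≠ 0)
    (fun z hz => (hE t z hz).2.2.2) ⟨x, h⟩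
  rw [hW.2 t a ha (fun x hx => by simpa using hm x hx)]
  exact ha

lemma same_of_not_opposite : ∀ a b : SignType, a ≠ 0 → b ≠ 0 → ¬ (a = 1 ∧ b = -1) →
    ¬ (a = -1 ∧ b = 1) → a = b := by decide

/-- A node `t` of the left view comes from a node of the strip `t` with no nonzero entry on its
left in the rows `t - 1` and `t`. -/
lemma first_node {n : ℤ} {E : ℤ → ℤ → SignType} {W : ℤ → SignType} (hE : BoundedBy n E)
    (hW : IsLeftView E W) {t : ℤ} (h : Node1 W t) :
    ∃ x, StripNode E t x ∧ ∀ y, y < x → E (t - 1) y = 0 ∧ E t y = 0 := by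
  obtain ⟨x, hx, hm⟩ := exists_least_int (P := fun x => E (t - 1) x ≠ 0 ∨ E t x ≠ 0) (b := 0)
    (fun z hz => hz.elim (fun h => (hE _ _ h).2.2.1) (fun h => (hE _ _ h).2.2.1)) (by
      by_contra! hc
      exact h.1.elim (fun h => h (hW.1 _ fun x => (hc x).1)) (fun h => h (hW.1 _ fun x => (hc x).2)))
  have hm' : ∀ y, y < x → E (t - 1) y = 0 ∧ E t y = 0 := fun y hy => by simpa using hm y hy
  refine ⟨x, ⟨by tauto, ?_⟩, hm'⟩
  have h1 := (hm' (x - 1) (by omega)).2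
  by_cases ha : E (t - 1) x = 0
  · exact ⟨E t x, by tauto⟩
  by_cases hb : E t x = 0
  · exact ⟨E (t - 1) x, by tauto⟩
  have e1 := hW.2 (t - 1) x ha fun y hy => (hm' y hy).1
  have e2 := hW.2 t x hb fun y hy => (hm' y hy).2
  have := same_of_not_opposite _ _ ha hb (by simpa [e1, e2] using h.2.1)
    (by simpa [e1, e2] using h.2.2)
  exact ⟨E t x, by tauto⟩

/-- A node `t` of the right view comes from a node of the strip `t` with no nonzero entry on its
right in the rows `t - 1` and `t`; in particular `E t x = 0`. -/
lemma last_node {n : ℤ} {E : ℤ → ℤ → SignType} {W : ℤ → SignType} (hE : BoundedBy n E)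
    (hW : IsRightView E W) {t : ℤ} (h : Node1 W t) :
    ∃ x, StripNode E t x ∧ ∀ y, x < y → E (t - 1) y = 0 ∧ E t (y - 1) = 0 := by
  obtain ⟨x, hx, hm⟩ := exists_greatest_int (P := fun x => E (t - 1) x ≠ 0 ∨ E t (x - 1) ≠ 0)
    (b := n + 1)
    (fun z hz => hz.elim (fun h => by have := hE _ _ h; omega)
      (fun h => by have := hE _ _ h; omega)) (by
      by_contra! hc
      exact h.1.elim (fun h => h (hW.1 _ fun x => (hc x).1))
        (fun h => h (hW.1 _ fun x => by simpa using (hc (x + 1)).2)))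
  have hm' : ∀ y, x < y → E (t - 1) y = 0 ∧ E t (y - 1) = 0 := fun y hy => by simpa using hm y hy
  refine ⟨x, ⟨by tauto, ?_⟩, hm'⟩
  have h1 : E t x = 0 := by simpa using (hm' (x + 1) (by omega)).2
  by_cases ha : E (t - 1) x = 0
  · exact ⟨E t (x - 1), by tauto⟩
  by_cases hb : E t (x - 1) = 0
  · exact ⟨E (t - 1) x, by tauto⟩
  have e1 := hW.2 (t - 1) x ha fun y hy => (hm' y hy).1
  have e2 := hW.2 t (x - 1) hb fun y hy => by simpa using (hm' (y + 1) (by omega)).2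
  have := same_of_not_opposite _ _ ha hb (by simpa [e1, e2] using h.2.1)
    (by simpa [e1, e2] using h.2.2)
  exact ⟨E t (x - 1), by tauto⟩

/-! ### Counting nodes -/

lemma stripNodes_finite {n : ℤ} {E : ℤ → ℤ → SignType} (hE : BoundedBy n E) :
    {p : ℤ × ℤ | StripNode E p.1 p.2}.Finite := by
  refine ((Set.finite_Icc 0 (n + 1)).prod (Set.finite_Icc 0 (n + 1))).subset ?_
  rintro ⟨t, x⟩ ⟨h | h | h, -⟩ <;> have := hE _ _ h <;>
    simp only [Set.mem_prod, Set.mem_Icc] <;> omega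

/-- A section of `A` over `B` that misses two points of `A` bounds the cardinality of `B`. -/
lemma ncard_add_two_le {A : Set (ℤ × ℤ)} (hA : A.Finite) {B : Set ℤ} {f : ℤ → ℤ}
    (hf : ∀ t ∈ B, (t, f t) ∈ A) {p q : ℤ × ℤ} (hp : p ∈ A) (hq : q ∈ A) (hpq : p ≠ q)
    (hp' : ¬ (p.1 ∈ B ∧ p.2 = f p.1)) (hq' : ¬ (q.1 ∈ B ∧ q.2 = f q.1)) :
    B.ncard + 2 ≤ A.ncard := by
  have hI : ((fun t => (t, f t)) '' B) ⊆ A := by rintro _ ⟨t, ht, rfl⟩; exact hf t ht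
  have hc : ((fun t => (t, f t)) '' B).ncard = B.ncard :=
    Set.ncard_image_of_injective _ fun a b h => (Prod.ext_iff.1 h).1
  have hd : Disjoint ((fun t => (t, f t)) '' B) {p, q} := by
    rw [Set.disjoint_left]
    rintro _ ⟨t, ht, rfl⟩ (rfl | rfl)
    · exact hp' ⟨ht, rfl⟩
    · exact hq' ⟨ht, rfl⟩
  rw [← hc, ← Set.ncard_pair hpq, ← Set.ncard_union_eq hd (hA.subset hI)]
  exact Set.ncard_le_ncard (Set.union_subset hI (by rintro _ (rfl | rfl) <;> assumption)) hA

/-- Either one of the two views loses two nodes, or the nodes of the array are rigid: the strip of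
the first nonzero row `t₀` has at most two nodes, and a node in another strip `t` forces row `t` to
vanish and row `t - 1` to have a single nonzero entry. -/
lemma rigid_or_gain {n : ℤ} {E : ℤ → ℤ → SignType} {W W' : ℤ → SignType} (hE : BoundedBy n E)
    (hW : IsLeftView E W) (hW' : IsRightView E W') {t₀ : ℤ} (h₀ : ∃ x, E t₀ x ≠ 0)
    (hmin : ∀ t, t < t₀ → ∀ x, E t x = 0) :
    ({t | Node1 W t}.ncard + 2 ≤ {p : ℤ × ℤ | StripNode E p.1 p.2}.ncard ∨
      {t | Node1 W' t}.ncard + 2 ≤ {p : ℤ × ℤ | StripNode E p.1 p.2}.ncard) ∨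
    ((∀ t x, t ≠ t₀ → StripNode E t x →
        (∀ y, E t y = 0) ∧ ∀ y, E (t - 1) y ≠ 0 → y = x) ∧
      ∃ u v, ∀ x, StripNode E t₀ x → x = u ∨ x = v) := by
  obtain ⟨x₀, hx₀⟩ := h₀
  have hB : Node1 W t₀ := by
    have := hW.1 (t₀ - 1) (hmin _ (by omega))
    exact ⟨Or.inr (hW.ne_zero hE hx₀), by simp [this], by simp [this]⟩
  have hB' : Node1 W' t₀ := by
    have := hW'.1 (t₀ - 1) (hmin _ (by omega))
    exact ⟨Or.inr (hW'.ne_zero hE hx₀), by simp [this], by simp [this]⟩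
  choose! f hf hf' using fun t (ht : Node1 W t) => first_node hE hW ht
  choose! g hg hg' using fun t (ht : Node1 W' t) => last_node hE hW' ht
  have hA := stripNodes_finite hE
  have key : ∀ t, Node1 W t → Node1 W' t → f t = g t →
      (∀ y, E t y = 0) ∧ ∀ y, E (t - 1) y ≠ 0 → y = f t := by
    intro t h1 h2 he
    constructor
    · intro y
      by_cases hy : y < f t
      · exact (hf' t h1 y hy).2
      · simpa using (hg' t h2 (y + 1) (by omega)).2
    · intro y hy
      by_contra hne
      rcases lt_or_gt_of_ne hne with h | h
      · exact hy (hf' t h1 y h).1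
      · exact hy (hg' t h2 y (by omega)).1
  have hfg : f t₀ ≠ g t₀ := fun he => hx₀ ((key t₀ hB hB' he).1 x₀)
  by_cases H1 : ∃ p : ℤ × ℤ, StripNode E p.1 p.2 ∧ p ≠ (t₀, g t₀) ∧ ¬ (Node1 W p.1 ∧ p.2 = f p.1)
  · obtain ⟨p, hp, hne, hn⟩ := H1
    exact Or.inl (Or.inl (ncard_add_two_le hA (f := f) (q := (t₀, g t₀)) hf hp (hg _ hB') hne hn
      fun h => hfg h.2.symm))
  by_cases H2 : ∃ p : ℤ × ℤ, StripNode E p.1 p.2 ∧ p ≠ (t₀, f t₀) ∧ ¬ (Node1 W' p.1 ∧ p.2 = g p.1)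
  · obtain ⟨p, hp, hne, hn⟩ := H2
    exact Or.inl (Or.inr (ncard_add_two_le hA (f := g) (q := (t₀, f t₀)) hg hp (hf _ hB) hne hn
      fun h => hfg h.2))
  push Not at H1 H2
  refine Or.inr ⟨fun t x ht hx => ?_, f t₀, g t₀, fun x hx => ?_⟩
  · obtain ⟨a1, a2⟩ := H1 (t, x) hx (by simp [ht])
    obtain ⟨b1, b2⟩ := H2 (t, x) hx (by simp [ht])
    simp only at a1 a2 b1 b2
    rw [a2]
    exact key t a1 b1 (a2.symm.trans b2)
  · by_cases h : x = g t₀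
    · exact Or.inr h
    · exact Or.inl (H1 (t₀, x) hx (by simp [h])).2

/-! ### Rigid arrays are single points -/

lemma not_node_left : ∀ a b c s : SignType, s ≠ 0 → (b = s ∨ b = 0) → (c = s ∨ c = 0) →
    (b = s ∨ c = s) →
    ¬ ((a ≠ 0 ∨ b ≠ 0 ∨ c ≠ 0) ∧
      ∃ r : SignType, (a = 0 ∨ a = r) ∧ (b = 0 ∨ b = r) ∧ (c = 0 ∨ c = r)) → a = -s := by
  decide

/-- If row `t` is constant and nonzero on an interval, zero elsewhere, and the strip `t` has no
nodes, then row `t - 1` carries the opposite sign on the interval extended by one point to the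
right, and is zero elsewhere. -/
lemma row_step {E : ℤ → ℤ → SignType} {t a b : ℤ} {s : SignType} (hs : s ≠ 0) (hab : a ≤ b)
    (hrow : ∀ x, E t x = if a ≤ x ∧ x ≤ b then s else 0) (hn : ∀ x, ¬ StripNode E t x) :
    ∀ x, E (t - 1) x = if a ≤ x ∧ x ≤ b + 1 then -s else 0 := by
  intro x
  have h1 := hrow x
  have h2 := hrow (x - 1)
  have hx := hn x
  split_ifs with h
  · refine not_node_left _ (E t (x - 1)) (E t x) s hs ?_ ?_ ?_ hx
    · rw [h2]; split_ifs <;> simp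
    · rw [h1]; split_ifs <;> simp
    · by_cases hxb : x ≤ b
      · right; rw [h1, if_pos ⟨h.1, hxb⟩]
      · left; rw [h2, if_pos (by omega)]
  · rw [if_neg (by omega)] at h1 h2
    by_contra hc
    exact hx ⟨Or.inl hc, _, Or.inr rfl, Or.inl h2, Or.inl h1⟩

/-- If row `T` is a single point and no strip `t > t₀` whose row `t` is nonzero has a node, then
row `T - i` is constant and nonzero on an interval of `i + 1` points and zero elsewhere. -/
lemma rows_of_noNode {E : ℤ → ℤ → SignType} {t₀ T x₀ : ℤ} (hx₀ : E T x₀ ≠ 0)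
    (huniq : ∀ y, E T y ≠ 0 → y = x₀)
    (hn : ∀ t, t₀ < t → (∃ y, E t y ≠ 0) → ∀ x, ¬ StripNode E t x) (i : ℕ) (hi : t₀ ≤ T - i) :
    ∃ s : SignType, s ≠ 0 ∧ ∀ x, E (T - i) x = if x₀ ≤ x ∧ x ≤ x₀ + i then s else 0 := by
  induction i with
  | zero =>
    refine ⟨E T x₀, hx₀, fun x => ?_⟩
    simp only [Nat.cast_zero, sub_zero, add_zero]
    split_ifs with h
    · rw [le_antisymm h.2 h.1]
    · by_contra hc
      have := huniq x hc
      omega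
  | succ i ih =>
    push_cast at hi
    obtain ⟨s, hs, hrow⟩ := ih (by omega)
    refine ⟨-s, by clear hrow; revert s; decide, fun x => ?_⟩
    have := row_step hs (by omega) hrow
      (hn (T - i) (by omega) ⟨x₀, by rw [hrow, if_pos (by omega)]; exact hs⟩) x
    push_cast
    rwa [sub_sub, add_assoc] at this

lemma stripNodes_of_single {E : ℤ → ℤ → SignType} {t x : ℤ}
    (h : ∀ s y, E s y ≠ 0 ↔ s = t ∧ y = x) :
    {p : ℤ × ℤ | StripNode E p.1 p.2}.ncard = 3 := by
  have hE : ∀ s y, ¬ (s = t ∧ y = x) → E s y = 0 := fun s y hn => by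
    by_contra hc; exact hn ((h s y).1 hc)
  have : {p : ℤ × ℤ | StripNode E p.1 p.2} = {(t + 1, x), (t, x + 1), (t, x)} := by
    ext ⟨s, y⟩
    simp only [Set.mem_ofPred_eq, Set.mem_insert_iff, Set.mem_singleton_iff, Prod.mk.injEq]
    constructor
    · rintro ⟨h1, -⟩
      simp only [h] at h1
      omega
    · rintro (⟨rfl, rfl⟩ | ⟨rfl, rfl⟩ | ⟨rfl, rfl⟩)
      · exact ⟨Or.inl ((h _ _).2 (by omega)), _, Or.inr rfl, Or.inl (hE _ _ (by omega)),
          Or.inl (hE _ _ (by omega))⟩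
      · exact ⟨Or.inr (Or.inl ((h _ _).2 (by omega))), _, Or.inl (hE _ _ (by omega)), Or.inr rfl,
          Or.inl (hE _ _ (by omega))⟩
      · exact ⟨Or.inr (Or.inr ((h _ _).2 (by omega))), _, Or.inl (hE _ _ (by omega)),
          Or.inl (hE _ _ (by omega)), Or.inr rfl⟩
  rw [this, Set.ncard_insert_of_notMem (by simp), Set.ncard_pair (by simp)]

/-- A nonzero one-dimensional array with finitely many nodes has at least two: one where its
support begins and one where it ends. -/
lemma two_le_ncard_node1 {W : ℤ → SignType} {t₀ T : ℤ} (hfin : {t | Node1 W t}.Finite)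
    (hle : t₀ ≤ T) (h₀ : W t₀ ≠ 0) (hT : W T ≠ 0) (hm : W (t₀ - 1) = 0) (hM : W (T + 1) = 0) :
    2 ≤ {t | Node1 W t}.ncard := by
  have hne : t₀ ≠ T + 1 := by omega
  rw [← Set.ncard_pair hne]
  refine Set.ncard_le_ncard ?_ hfin
  rintro _ (rfl | rfl)
  · exact ⟨Or.inr h₀, by simp [hm], by simp [hm]⟩
  · exact ⟨Or.inl (by simpa using hT), by simp [hM], by simp [hM]⟩

/-- The theorem for planar arrays: a nonzero array is a single point with three nodes, or it has
more than three nodes and at least two more than one of its two views. -/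
lemma strip_main {n : ℤ} {E : ℤ → ℤ → SignType} {W W' : ℤ → SignType} (hE : BoundedBy n E)
    (hW : IsLeftView E W) (hW' : IsRightView E W') (hne : ∃ t x, E t x ≠ 0) :
    ({p : ℤ × ℤ | StripNode E p.1 p.2}.ncard = 3 ∧ ∃ t x, ∀ s y, E s y ≠ 0 ↔ s = t ∧ y = x) ∨
    (3 < {p : ℤ × ℤ | StripNode E p.1 p.2}.ncard ∧
      ({t | Node1 W t}.ncard + 2 ≤ {p : ℤ × ℤ | StripNode E p.1 p.2}.ncard ∨
        {t | Node1 W' t}.ncard + 2 ≤ {p : ℤ × ℤ | StripNode E p.1 p.2}.ncard)) := by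
  obtain ⟨t₀, ⟨y₀, hy₀⟩, hmin⟩ := exists_least_int (P := fun t => ∃ x, E t x ≠ 0)
    (fun t ⟨x, hx⟩ => (hE t x hx).1) hne
  obtain ⟨T, ⟨x₀, hx₀⟩, hmax⟩ := exists_greatest_int (P := fun t => ∃ x, E t x ≠ 0)
    (fun t ⟨x, hx⟩ => (hE t x hx).2.1) hne
  push Not at hmin hmax
  have hle : t₀ ≤ T := by
    by_contra hc
    exact hx₀ (hmin T (by omega) x₀)
  have hA := stripNodes_finite hE
  have hBfin : {t | Node1 W t}.Finite := (hA.image Prod.fst).subset fun t ht => by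
    obtain ⟨x, hx, -⟩ := first_node hE hW ht
    exact ⟨(t, x), hx, rfl⟩
  have hBfin' : {t | Node1 W' t}.Finite := (hA.image Prod.fst).subset fun t ht => by
    obtain ⟨x, hx, -⟩ := last_node hE hW' ht
    exact ⟨(t, x), hx, rfl⟩
  have h2 := two_le_ncard_node1 hBfin hle (hW.ne_zero hE hy₀) (hW.ne_zero hE hx₀)
    (hW.1 _ (hmin _ (by omega))) (hW.1 _ (hmax _ (by omega)))
  have h2' := two_le_ncard_node1 hBfin' hle (hW'.ne_zero hE hy₀) (hW'.ne_zero hE hx₀)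
    (hW'.1 _ (hmin _ (by omega))) (hW'.1 _ (hmax _ (by omega)))
  rcases rigid_or_gain hE hW hW' ⟨y₀, hy₀⟩ hmin with h | ⟨hK, u, v, huv⟩
  · exact Or.inr ⟨by omega, h⟩
  left
  have huniq : ∀ y, E T y ≠ 0 → y = x₀ := by
    have hnode : StripNode E (T + 1) x₀ :=
      ⟨Or.inl (by simpa using hx₀), _, Or.inr rfl, Or.inl (hmax _ (by omega) _),
        Or.inl (hmax _ (by omega) _)⟩
    simpa using (hK (T + 1) x₀ (by omega) hnode).2
  have hrows := rows_of_noNode (t₀ := t₀) hx₀ huniq fun t ht ⟨y, hy⟩ x hx =>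
    hy ((hK t x (by omega) hx).1 y)
  have hT : T = t₀ := by
    by_contra hc
    obtain ⟨s, hs, hrow⟩ := hrows (T - t₀).toNat (by omega)
    rw [show T - ((T - t₀).toNat : ℤ) = t₀ by omega] at hrow
    have hz := hmin (t₀ - 1) (by omega)
    have e1 : E t₀ x₀ = s := by rw [hrow, if_pos (by omega)]
    have e2 : E t₀ (x₀ + 1) = s := by rw [hrow, if_pos (by omega)]
    have eb : E t₀ (x₀ + (T - t₀)) = s := by rw [hrow, if_pos (by omega)]
    -- The leftmost triangle, the one holding two equal entries, and the rightmost one.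
    have n1 : StripNode E t₀ x₀ :=
      ⟨Or.inr (Or.inr (e1 ▸ hs)), _, Or.inl (hz _),
        Or.inl (by rw [hrow, if_neg (by omega)]), Or.inr rfl⟩
    have n2 : StripNode E t₀ (x₀ + 1) :=
      ⟨Or.inr (Or.inr (e2 ▸ hs)), s, Or.inl (hz _), Or.inr (by simpa using e1), Or.inr e2⟩
    have n3 : StripNode E t₀ (x₀ + (T - t₀) + 1) :=
      ⟨Or.inr (Or.inl (by simpa [eb] using hs)), s, Or.inl (hz _), Or.inr (by simpa using eb),
        Or.inl (by rw [hrow, if_neg (by omega)])⟩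
    have := huv _ n1
    have := huv _ n2
    have := huv _ n3
    omega
  have hsingle : ∀ s y, E s y ≠ 0 ↔ s = T ∧ y = x₀ := by
    refine fun s y => ⟨fun h => ?_, ?_⟩
    · have h1 : ¬ s < t₀ := fun hc => h (hmin s hc y)
      have h2 : ¬ T < s := fun hc => h (hmax s hc y)
      obtain rfl : s = T := by omega
      exact ⟨rfl, huniq y h⟩
    · rintro ⟨rfl, rfl⟩
      exact hx₀
  exact ⟨stripNodes_of_single hsingle, T, x₀, hsingle⟩

/-! ### From symmetric diagrams to planar arrays -/

/-- The rows of a diagram of degree `d` in the direction of the coordinate `0`. -/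
def rowArray (d : ℕ) (D : (Fin 3 → ℤ) → SignType) (t x : ℤ) : SignType := D ![t, x, d - t - x]

lemma symmNode_iff (d : ℕ) (D : (Fin 3 → ℤ) → SignType) (t x : ℤ) :
    SymmNode D ![t, x, d + 1 - t - x] ↔ StripNode (rowArray d D) t x := by
  have h0 : D (downk 0 ![t, x, d + 1 - t - x]) = rowArray d D (t - 1) x := by
    unfold rowArray downk; congr 1; ext i; fin_cases i <;> simp; ring
  have h1 : D (downk 1 ![t, x, d + 1 - t - x]) = rowArray d D t (x - 1) := by
    unfold rowArray downk; congr 1; ext i; fin_cases i <;> simp; ring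
  have h2 : D (downk 2 ![t, x, d + 1 - t - x]) = rowArray d D t x := by
    unfold rowArray downk; congr 1; ext i; fin_cases i <;> simp; ring
  unfold SymmNode StripNode
  simp only [Fin.exists_fin_succ, Fin.succ_zero_eq_one, Fin.succ_one_eq_two, h0, h1, h2,
    IsEmpty.exists_iff, or_false]
  generalize rowArray d D (t - 1) x = a
  generalize rowArray d D t (x - 1) = b
  generalize rowArray d D t x = c
  revert a b c
  decide

/-- A node of a diagram of degree `d` has coordinate sum `d + 1`, so it is determined by its first
two coordinates. -/
lemma symmNodeCount_eq {d : ℕ} {D : (Fin 3 → ℤ) → SignType}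
    (hsupp : ∀ α : Fin 3 → ℤ, D α ≠ 0 → (∀ i, 0 ≤ α i) ∧ (∑ i, α i) = (d : ℤ)) :
    symmNodeCount D = {p : ℤ × ℤ | StripNode (rowArray d D) p.1 p.2}.ncard := by
  have hinj : Function.Injective fun p : ℤ × ℤ => (![p.1, p.2, d + 1 - p.1 - p.2] : Fin 3 → ℤ) :=
    fun p q h => Prod.ext (congrFun h 0) (congrFun h 1)
  rw [symmNodeCount, ← Set.ncard_image_of_injective _ hinj]
  congr 1
  ext α
  constructor
  · intro h
    obtain ⟨k, hk⟩ := h.1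
    have hs := (hsupp _ hk).2
    have hα : α = ![α 0, α 1, d + 1 - α 0 - α 1] := by
      ext i
      fin_cases i
      · rfl
      · rfl
      · fin_cases k <;> simp [downk, Fin.sum_univ_three] at hs <;> simp <;> omega
    refine ⟨(α 0, α 1), ?_, hα.symm⟩
    change StripNode (rowArray d D) (α 0) (α 1)
    rw [← symmNode_iff, ← hα]
    exact h
  · rintro ⟨p, hp, rfl⟩
    exact (symmNode_iff d D p.1 p.2).2 hp

lemma isLeftView_symmView (d : ℕ) (D : (Fin 3 → ℤ) → SignType) :
    IsLeftView (rowArray d D) (symmView d D 1 2 0) := by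
  have hf : ∀ t a : ℤ, D (fun i : Fin 3 => if i = 0 then t else if i = 1 then a else
      ((d : ℤ) - t) - a) = rowArray d D t a := by
    intro t a
    unfold rowArray; congr 1; ext i; fin_cases i <;> simp
  constructor
  · intro t h
    simp [symmView, hf, h]
  · intro t a ha hlt
    have hl : IsLeast {b : ℤ | rowArray d D t b ≠ 0} a :=
      ⟨ha, fun b hb => not_lt.1 fun hc => hb (hlt b hc)⟩
    simp only [symmView, hf]
    rw [if_pos ⟨a, by simpa [hf] using ha⟩, hl.csInf_eq]

lemma isRightView_symmView (d : ℕ) (D : (Fin 3 → ℤ) → SignType) :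
    IsRightView (rowArray d D) (symmView d D 2 1 0) := by
  have hf : ∀ t a : ℤ, D (fun i : Fin 3 => if i = 0 then t else if i = 2 then a else
      ((d : ℤ) - t) - a) = rowArray d D t (d - t - a) := by
    intro t a
    unfold rowArray; congr 1; ext i; fin_cases i <;> simp
  constructor
  · intro t h
    simp [symmView, hf, h]
  · intro t a ha hlt
    have hl : IsLeast {b : ℤ | rowArray d D t (d - t - b) ≠ 0} (d - t - a) :=
      ⟨by simpa using ha, fun b hb => not_lt.1 fun hc => hb (hlt _ (by omega))⟩
    simp only [symmView, hf]
    rw [if_pos ⟨d - t - a, by simpa [hf] using ha⟩, hl.csInf_eq]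
    simp

/-- a 2-dimensional symmetric diagram `D` (of degree `d`,
extended by zero off `H_d`) that is not identically zero has either
`#(D) = 3`, in which case it has exactly one nonzero point, or `#(D) > 3`, in
which case some view satisfies `#(V(D,k,m)) ≤ #(D) − 2` (stated without
truncated subtraction). -/
theorem stmt15 (d : ℕ) (D : (Fin 3 → ℤ) → SignType)
    (hsupp : ∀ α : Fin 3 → ℤ, D α ≠ 0 → (∀ i, 0 ≤ α i) ∧ (∑ i, α i) = (d : ℤ))
    (hne : ∃ α, D α ≠ 0) :
    (symmNodeCount D = 3 ∧ ∃! α : Fin 3 → ℤ, D α ≠ 0) ∨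
    (3 < symmNodeCount D ∧ ∃ k m j : Fin 3, k ≠ m ∧ j ≠ k ∧ j ≠ m ∧
      Set.ncard {t : ℤ | Node1 (symmView d D k m j) t} + 2 ≤
        symmNodeCount D) := by
  have hrow : ∀ α, D α ≠ 0 → α = ![α 0, α 1, d - α 0 - α 1] := by
    intro α h
    have hs := (hsupp α h).2
    rw [Fin.sum_univ_three] at hs
    ext i
    fin_cases i
    · rfl
    · rfl
    · simp; omega
  have hE : BoundedBy d (rowArray d D) := by
    intro t x h
    have hs := (hsupp _ h).1
    have h0 := hs 0
    have h1 := hs 1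
    have h2 := hs 2
    simp at h0 h1 h2
    omega
  obtain ⟨β, hβ⟩ := hne
  rw [symmNodeCount_eq hsupp]
  rcases strip_main hE (isLeftView_symmView d D) (isRightView_symmView d D)
    ⟨β 0, β 1, by unfold rowArray; rwa [← hrow β hβ]⟩ with ⟨h3, t, x, hx⟩ | ⟨h3, h | h⟩
  · refine Or.inl ⟨h3, ![t, x, d - t - x], (hx t x).2 ⟨rfl, rfl⟩, fun α hα => ?_⟩
    have h := (hx (α 0) (α 1)).1 (by unfold rowArray; rwa [← hrow α hα])
    rw [hrow α hα, h.1, h.2]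
  · exact Or.inr ⟨h3, 1, 2, 0, by decide, by decide, by decide, h⟩
  · exact Or.inr ⟨h3, 2, 1, 0, by decide, by decide, by decide, h⟩
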